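/- Let u ∈ C¹_c(ℝⁿ) and a a finite nonnegative measure on S^{n−1}. Then lim_{s→1⁻} (1−s) ∫_{ℝⁿ} dx ∫_ℝ dρ ∫_{S^{n−1}} da(ω) (u(x) − u(x+ρω))²/|ρ|^{1+2s} = ∫_{ℝⁿ} dx ∫_{S^{n−1}} da(ω) (∇u(x)·ω)². -/

import Mathlib

open MeasureTheory Real Set Filter

open scoped Topology NNReal

/-!
The translation energy `∫ ‖u x - u (x + h)‖ ^ p` is at most `C * min 1 (‖h‖ ^ p)` when `u` is
Lipschitz with compact support, so Fubini turns the triple integral into `∫ g ρ / |ρ| ^ (1 + p * s)`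
with `g` even and `O(min 1 (|ρ| ^ p))`. On the half-line, with `t = p * (1 - s)`, this is the
integral of `g r / r ^ p` against `r ^ (t - 1)`. As `t → 0⁺` the measure `t * r ^ (t - 1) dr` puts
mass one on `(0, 1)` and concentrates at the origin, so only the limit of `g r / r ^ p` at `0⁺`
survives; by Rademacher's theorem and dominated convergence it is the gradient energy. The factor
`2 / p` counts the two half-lines and converts `1 - s` into `t`.
-/

section PowerWeight

lemma min_one_rpow_inv_rpow_neg_le {q t y : ℝ} (ht : 0 < t) (htq : 2 * t ≤ q) (hy : 0 < y) :
    min 1 ((y ^ t⁻¹) ^ (-q)) ≤ 2 * (1 + y ^ 2)⁻¹ := by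
  have h_tail : y ^ 2 * (y ^ t⁻¹) ^ (-q) ≤ 1 ∨ y ≤ 1 := by
    refine (le_total 1 y).imp_left fun h1 ↦ ?_
    have h_exp : 2 + t⁻¹ * -q ≤ 0 := by
      have : 2 ≤ t⁻¹ * q := by rwa [inv_mul_eq_div, le_div_iff₀ ht]
      linarith
    rw [← rpow_mul hy.le, ← rpow_two, ← rpow_add hy]
    exact rpow_le_one_of_one_le_of_nonpos h1 h_exp
  rw [← div_eq_mul_inv, le_div_iff₀ (by positivity)]
  have h_one := min_le_left 1 ((y ^ t⁻¹) ^ (-q))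
  have h_rpow := min_le_right 1 ((y ^ t⁻¹) ^ (-q))
  rcases h_tail with h | h <;> nlinarith [sq_nonneg y]

variable {X : Type*} [NormedAddCommGroup X] {γ : ℝ → X} {C q t : ℝ}

lemma norm_comp_rpow_inv_le {y : ℝ} (hγ : ∀ r, 0 < r → ‖γ r‖ ≤ C * min 1 (r ^ (-q)))
    (ht : 0 < t) (htq : 2 * t ≤ q) (hy : 0 < y) :
    ‖γ (y ^ t⁻¹)‖ ≤ C * (2 * (1 + y ^ 2)⁻¹) := by
  have hC : 0 ≤ C := by simpa using (norm_nonneg _).trans (hγ 1 one_pos)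
  exact (hγ _ (rpow_pos_of_pos hy _)).trans
    (mul_le_mul_of_nonneg_left (min_one_rpow_inv_rpow_neg_le ht htq hy) hC)

lemma integrableOn_Ioi_comp_rpow_inv (hγm : StronglyMeasurable γ)
    (hγ : ∀ r, 0 < r → ‖γ r‖ ≤ C * min 1 (r ^ (-q))) (ht : 0 < t) (htq : 2 * t ≤ q) :
    IntegrableOn (fun y ↦ γ (y ^ t⁻¹)) (Ioi 0) := by
  refine ((integrable_inv_one_add_sq.const_mul 2).const_mul C).integrableOn.mono'
    (hγm.comp_measurable (by fun_prop)).aestronglyMeasurable ?_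
  filter_upwards [ae_restrict_mem measurableSet_Ioi] with y hy
  exact norm_comp_rpow_inv_le hγ ht htq hy

lemma tendsto_comp_rpow_inv {G : X} (hq : 0 < q)
    (hγ : ∀ r, 0 < r → ‖γ r‖ ≤ C * min 1 (r ^ (-q))) (hG : Tendsto γ (𝓝[>] 0) (𝓝 G))
    {y : ℝ} (hy : 0 < y) (hy1 : y ≠ 1) :
    Tendsto (fun t : ℝ ↦ γ (y ^ t⁻¹)) (𝓝[>] 0) (𝓝 ((Iio 1).indicator (fun _ ↦ G) y)) := by
  rcases hy1.lt_or_gt with h | h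
  · rw [indicator_of_mem (mem_Iio.2 h)]
    refine hG.comp (tendsto_nhdsWithin_iff.2 ⟨?_, .of_forall fun t ↦ rpow_pos_of_pos hy _⟩)
    exact (tendsto_rpow_atTop_of_base_lt_one y (by linarith) h).comp tendsto_inv_nhdsGT_zero
  · rw [indicator_of_notMem (by simpa using h.le)]
    have h_decay : Tendsto (fun r : ℝ ↦ C * r ^ (-q)) atTop (𝓝 0) := by
      simpa using (tendsto_rpow_neg_atTop hq).const_mul C
    refine (squeeze_zero_norm' ?_ h_decay).comp
      ((tendsto_rpow_atTop_of_base_gt_one y h).comp tendsto_inv_nhdsGT_zero)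
    have hC : 0 ≤ C := by simpa using (norm_nonneg _).trans (hγ 1 one_pos)
    filter_upwards [eventually_gt_atTop 0] with r hr
    exact (hγ r hr).trans (mul_le_mul_of_nonneg_left (min_le_right _ _) hC)

variable [NormedSpace ℝ X]

lemma rpow_sub_one_smul_eq_comp_rpow_inv (γ : ℝ → X) (ht : t ≠ 0) {r : ℝ} (hr : 0 < r) :
    (t * r ^ (t - 1)) • γ r = (t * r ^ (t - 1)) • (fun y ↦ γ (y ^ t⁻¹)) (r ^ t) := by
  simp only [rpow_rpow_inv hr.le ht]

lemma integrableOn_Ioi_rpow_sub_one_smul (hγm : StronglyMeasurable γ)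
    (hγ : ∀ r, 0 < r → ‖γ r‖ ≤ C * min 1 (r ^ (-q))) (ht : 0 < t) (htq : 2 * t ≤ q) :
    IntegrableOn (fun r ↦ (t * r ^ (t - 1)) • γ r) (Ioi 0) := by
  have h := (integrableOn_Ioi_comp_rpow_iff _ ht.ne').2
    (integrableOn_Ioi_comp_rpow_inv hγm hγ ht htq)
  rw [abs_of_pos ht] at h
  exact h.congr_fun (fun r hr ↦ (rpow_sub_one_smul_eq_comp_rpow_inv γ ht.ne' hr).symm)
    measurableSet_Ioi

-- The substitution `y = r ^ t` turns the weight `t * r ^ (t - 1)` into Lebesgue measure, and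
-- `γ (y ^ t⁻¹)` tends to `G` for `y < 1` and to `0` for `y > 1`.
lemma tendsto_integral_Ioi_rpow_sub_one_smul [CompleteSpace X] {G : X} (hq : 0 < q)
    (hγm : StronglyMeasurable γ) (hγ : ∀ r, 0 < r → ‖γ r‖ ≤ C * min 1 (r ^ (-q)))
    (hG : Tendsto γ (𝓝[>] 0) (𝓝 G)) :
    Tendsto (fun t : ℝ ↦ ∫ r in Ioi 0, (t * r ^ (t - 1)) • γ r) (𝓝[>] 0) (𝓝 G) := by
  have h_subst : ∀ t : ℝ, 0 < t →
      ∫ y in Ioi 0, γ (y ^ t⁻¹) = ∫ r in Ioi 0, (t * r ^ (t - 1)) • γ r := fun t ht ↦ by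
    rw [← integral_comp_rpow_Ioi_of_pos ht]
    exact (setIntegral_congr_fun measurableSet_Ioi fun r hr ↦
      rpow_sub_one_smul_eq_comp_rpow_inv γ ht.ne' hr).symm
  have h_limit : ∫ y in Ioi (0 : ℝ), (Iio 1).indicator (fun _ ↦ G) y = G := by
    rw [setIntegral_indicator measurableSet_Iio, Ioi_inter_Iio]
    simp
  have h_small : ∀ᶠ t : ℝ in 𝓝[>] 0, 0 < t ∧ 2 * t ≤ q :=
    Filter.mem_of_superset (Ioo_mem_nhdsGT (half_pos hq)) fun t ht ↦ ⟨ht.1, by linarith [ht.2]⟩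
  suffices Tendsto (fun t : ℝ ↦ ∫ y in Ioi 0, γ (y ^ t⁻¹)) (𝓝[>] 0) (𝓝 G) from
    this.congr' (eventually_mem_nhdsWithin.mono h_subst)
  rw [← h_limit]
  refine tendsto_integral_filter_of_dominated_convergence (fun y ↦ C * (2 * (1 + y ^ 2)⁻¹))
    ?_ ?_ ((integrable_inv_one_add_sq.const_mul 2).const_mul C).integrableOn ?_
  · exact .of_forall fun t ↦ (hγm.comp_measurable (by fun_prop)).aestronglyMeasurable
  · filter_upwards [h_small] with t ht
    filter_upwards [ae_restrict_mem measurableSet_Ioi] with y hy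
    exact norm_comp_rpow_inv_le hγ ht.1 ht.2 hy
  · filter_upwards [ae_restrict_mem measurableSet_Ioi, Measure.ae_ne _ 1] with y hy hy1
    exact tendsto_comp_rpow_inv hq hγ hG hy hy1

end PowerWeight

section RadialIntegral

variable {g : ℝ → ℝ} {C p s : ℝ}

lemma mul_rpow_sub_one_mul_div_rpow (g : ℝ → ℝ) (p s : ℝ) {r : ℝ} (hr : 0 < r) :
    (p * (1 - s) * r ^ (p * (1 - s) - 1)) • (g r / r ^ p)
      = p * (1 - s) * (g r / r ^ (1 + p * s)) := by
  have h_exp : r ^ (p * (1 - s) - 1) = r ^ p / r ^ (1 + p * s) := by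
    rw [← rpow_sub hr]
    ring_nf
  have := (rpow_pos_of_pos hr p).ne'
  rw [h_exp, smul_eq_mul]
  field_simp

lemma norm_div_rpow_le (hg : ∀ r, 0 < r → ‖g r‖ ≤ C * min 1 (r ^ p)) {r : ℝ} (hr : 0 < r) :
    ‖g r / r ^ p‖ ≤ C * min 1 (r ^ (-p)) := by
  have hrp := rpow_pos_of_pos hr p
  rw [norm_div, norm_of_nonneg hrp.le, div_le_iff₀ hrp, mul_assoc, min_mul_of_nonneg _ _ hrp.le,
    one_mul, rpow_neg hr.le, inv_mul_cancel₀ hrp.ne', min_comm]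
  exact hg r hr

lemma integrable_comp_abs_div_abs_rpow (hp : 0 < p) (hgm : StronglyMeasurable g)
    (hg : ∀ r, 0 < r → ‖g r‖ ≤ C * min 1 (r ^ p)) (hs : 1 / 2 ≤ s) (hs1 : s < 1) :
    Integrable fun ρ : ℝ ↦ g |ρ| / |ρ| ^ (1 + p * s) := by
  have ht : 0 < p * (1 - s) := mul_pos hp (by linarith)
  have h_half : IntegrableOn (fun r ↦ g r / r ^ (1 + p * s)) (Ioi 0) := by
    have h_meas : StronglyMeasurable fun r ↦ g r / r ^ p :=
      (hgm.measurable.div (by fun_prop)).stronglyMeasurable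
    have h := (integrableOn_Ioi_rpow_sub_one_smul h_meas
      (fun r hr ↦ norm_div_rpow_le hg hr) ht (by nlinarith)).congr_fun
        (fun r hr ↦ mul_rpow_sub_one_mul_div_rpow g p s hr) measurableSet_Ioi
    exact (integrable_const_mul_iff (IsUnit.mk0 _ ht.ne') _).1 h
  exact (integrable_fun_norm_addHaar (F := ℝ) volume (f := fun r ↦ g r / r ^ (1 + p * s))).2
    (by simpa using h_half)

lemma tendsto_one_sub_mul_integral_comp_abs_div_abs_rpow {G : ℝ} (hp : 0 < p)
    (hgm : StronglyMeasurable g) (hg : ∀ r, 0 < r → ‖g r‖ ≤ C * min 1 (r ^ p))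
    (hG : Tendsto (fun r ↦ g r / r ^ p) (𝓝[>] 0) (𝓝 G)) :
    Tendsto (fun s : ℝ ↦ (1 - s) * ∫ ρ : ℝ, g |ρ| / |ρ| ^ (1 + p * s)) (𝓝[<] 1)
      (𝓝 (2 / p * G)) := by
  have h_exp : Tendsto (fun s : ℝ ↦ p * (1 - s)) (𝓝[<] 1) (𝓝[>] 0) := by
    refine tendsto_nhdsWithin_iff.2 ⟨?_, eventually_mem_nhdsWithin.mono fun s hs ↦
      mul_pos hp (sub_pos.2 hs)⟩
    have : Continuous fun s : ℝ ↦ p * (1 - s) := by fun_prop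
    simpa using (this.tendsto 1).mono_left nhdsWithin_le_nhds
  have h_meas : StronglyMeasurable fun r ↦ g r / r ^ p :=
    (hgm.measurable.div (by fun_prop)).stronglyMeasurable
  have h_limit := ((tendsto_integral_Ioi_rpow_sub_one_smul hp h_meas
    (fun r hr ↦ norm_div_rpow_le hg hr) hG).comp h_exp).const_mul (2 / p)
  refine h_limit.congr fun s ↦ ?_
  rw [Function.comp_apply, setIntegral_congr_fun measurableSet_Ioi fun r hr ↦
    mul_rpow_sub_one_mul_div_rpow g p s hr, integral_const_mul,
    integral_comp_abs (f := fun r ↦ g r / r ^ (1 + p * s))]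
  field_simp

end RadialIntegral

section TranslationEnergy

variable {E F : Type*} [NormedAddCommGroup F]

/-- The `p`-th power of the `L^p(μ)` norm of the increment `x ↦ u x - u (x + h)`. -/
noncomputable def translationEnergy [Add E] [MeasurableSpace E] (p : ℝ) (μ : Measure E)
    (u : E → F) (h : E) : ℝ :=
  ∫ x, ‖u x - u (x + h)‖ ^ p ∂μ

variable {p M : ℝ} {u : E → F} {h : E}

lemma translationEnergy_nonneg [Add E] [MeasurableSpace E] (p : ℝ) (μ : Measure E)
    (u : E → F) (h : E) : 0 ≤ translationEnergy p μ u h :=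
  integral_nonneg fun _ ↦ by positivity

lemma translationEnergy_neg [AddGroup E] [MeasurableSpace E] [MeasurableAdd E] (p : ℝ)
    (μ : Measure E) [μ.IsAddRightInvariant] (u : E → F) (h : E) :
    translationEnergy p μ u (-h) = translationEnergy p μ u h := by
  unfold translationEnergy
  rw [← integral_add_right_eq_self (fun x ↦ ‖u x - u (x + -h)‖ ^ p) h]
  simp only [add_neg_cancel_right, norm_sub_rev]

lemma support_norm_sub_translate_rpow_subset [TopologicalSpace E] [Add E] (hp : p ≠ 0) :
    (Function.support fun x ↦ ‖u x - u (x + h)‖ ^ p) ⊆ tsupport u ∪ (· + h) ⁻¹' tsupport u := by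
  intro x hx
  by_contra hx'
  simp only [mem_union, mem_preimage, not_or] at hx'
  simp [image_eq_zero_of_notMem_tsupport hx'.1, image_eq_zero_of_notMem_tsupport hx'.2, hp] at hx

lemma hasCompactSupport_norm_sub_translate_rpow [TopologicalSpace E] [AddGroup E]
    [IsTopologicalAddGroup E] [R1Space E] (hsupp : HasCompactSupport u) (hp : p ≠ 0) (h : E) :
    HasCompactSupport fun x ↦ ‖u x - u (x + h)‖ ^ p :=
  .of_support_subset_isCompact (hsupp.isCompact.union
    ((Homeomorph.addRight h).isCompact_preimage.2 hsupp.isCompact))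
    (support_norm_sub_translate_rpow_subset hp)

section Bounds

variable [NormedAddCommGroup E] [MeasurableSpace E] [BorelSpace E] {μ : Measure E}
  [IsFiniteMeasureOnCompacts μ]

lemma integrable_norm_sub_translate_rpow (hu : Continuous u) (hsupp : HasCompactSupport u)
    (hp : 0 < p) (h : E) : Integrable (fun x ↦ ‖u x - u (x + h)‖ ^ p) μ :=
  Continuous.integrable_of_hasCompactSupport
    (((hu.sub (hu.comp (continuous_id.add continuous_const))).norm).rpow_const fun _ ↦ .inr hp.le)
    (hasCompactSupport_norm_sub_translate_rpow hsupp hp.ne' h)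

variable [μ.IsAddRightInvariant]

lemma translationEnergy_le_of_norm_sub_le (hsupp : HasCompactSupport u) (hp : 0 < p)
    (hM : ∀ x, ‖u x - u (x + h)‖ ≤ M) :
    translationEnergy p μ u h ≤ 2 * μ.real (tsupport u) * M ^ p := by
  set S := tsupport u ∪ (· + h) ⁻¹' tsupport u
  have hK : μ (tsupport u) ≠ ⊤ := hsupp.isCompact.measure_lt_top.ne
  have hS : μ S < ⊤ := measure_union_lt_top hK.lt_top
    (by rw [measure_preimage_add_right]; exact hK.lt_top)
  have hM0 : 0 ≤ M := (norm_nonneg _).trans (hM 0)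
  have h_measure : μ.real S ≤ 2 * μ.real (tsupport u) := by
    refine (measureReal_union_le _ _).trans_eq ?_
    rw [measureReal_def μ (_ ⁻¹' _), measure_preimage_add_right, ← measureReal_def, two_mul]
  calc translationEnergy p μ u h = ∫ x in S, ‖u x - u (x + h)‖ ^ p ∂μ :=
        (setIntegral_eq_integral_of_forall_compl_eq_zero fun x hx ↦
          Function.notMem_support.1 fun hx' ↦
            hx (support_norm_sub_translate_rpow_subset hp.ne' hx')).symm
    _ ≤ ‖∫ x in S, ‖u x - u (x + h)‖ ^ p ∂μ‖ := le_norm_self _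
    _ ≤ M ^ p * μ.real S := norm_setIntegral_le_of_norm_le_const hS fun x _ ↦ by
        rw [norm_of_nonneg (by positivity)]
        exact rpow_le_rpow (norm_nonneg _) (hM x) hp.le
    _ ≤ 2 * μ.real (tsupport u) * M ^ p := by
        rw [mul_comm]
        exact mul_le_mul_of_nonneg_right h_measure (by positivity)

lemma exists_translationEnergy_le {L : ℝ≥0} (hu : LipschitzWith L u)
    (hsupp : HasCompactSupport u) (hp : 0 < p) :
    ∃ C, 0 ≤ C ∧ ∀ h, translationEnergy p μ u h ≤ C * min 1 (‖h‖ ^ p) := by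
  obtain ⟨B, hB⟩ := hsupp.exists_bound_of_continuous hu.continuous
  have hB0 : 0 ≤ B := (norm_nonneg _).trans (hB 0)
  set V := 2 * μ.real (tsupport u)
  have hV0 : 0 ≤ V := by positivity
  refine ⟨V * max ((2 * B) ^ p) (L ^ p), by positivity, fun h ↦ ?_⟩
  rw [mul_min_of_nonneg _ _ (by positivity), mul_one, mul_assoc V]
  refine le_min ?_ ?_
  · refine (translationEnergy_le_of_norm_sub_le hsupp hp (M := 2 * B) fun x ↦ ?_).trans ?_
    · linarith [norm_sub_le (u x) (u (x + h)), hB x, hB (x + h)]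
    · exact mul_le_mul_of_nonneg_left (le_max_left _ _) hV0
  · refine (translationEnergy_le_of_norm_sub_le hsupp hp (M := L * ‖h‖) fun x ↦ ?_).trans ?_
    · simpa using hu.norm_sub_le x (x + h)
    · rw [mul_rpow L.coe_nonneg (norm_nonneg h)]
      exact mul_le_mul_of_nonneg_left
        (mul_le_mul_of_nonneg_right (le_max_right _ _) (by positivity)) hV0

end Bounds

lemma stronglyMeasurable_translationEnergy [NormedAddCommGroup E] [MeasurableSpace E]
    [BorelSpace E] [SecondCountableTopology E] {μ : Measure E} [SFinite μ] (hu : Continuous u)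
    (hp : 0 ≤ p) : StronglyMeasurable (translationEnergy p μ u) := by
  have : Continuous fun z : E × E ↦ ‖u z.1 - u (z.1 + z.2)‖ ^ p :=
    Continuous.rpow_const (by fun_prop) fun _ ↦ .inr hp
  exact this.stronglyMeasurable.integral_prod_left

end TranslationEnergy

section SmallTranslations

variable {E F : Type*} [NormedAddCommGroup E] [NormedSpace ℝ E]
  [NormedAddCommGroup F] {p r : ℝ} {u : E → F} {ω x : E} {L : ℝ≥0}

lemma norm_sub_smul_rpow_div_le (hu : LipschitzWith L u) (hp : 0 ≤ p) (hr : 0 < r) (x ω : E) :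
    ‖u x - u (x + r • ω)‖ ^ p / r ^ p ≤ (L * ‖ω‖) ^ p := by
  rw [← div_rpow (norm_nonneg _) hr.le]
  refine rpow_le_rpow (by positivity) ?_ hp
  rw [div_le_iff₀ hr]
  calc ‖u x - u (x + r • ω)‖ ≤ L * ‖x - (x + r • ω)‖ := hu.norm_sub_le _ _
    _ = L * ‖ω‖ * r := by
      rw [sub_add_cancel_left, norm_neg, norm_smul, norm_of_nonneg hr.le]
      ring

lemma norm_sub_smul_eq_zero (hr : 0 ≤ r) (hr1 : r ≤ 1)
    (hx : x ∉ Metric.cthickening ‖ω‖ (tsupport u)) : u x - u (x + r • ω) = 0 := by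
  have h_near : x + r • ω ∉ tsupport u := fun h ↦ hx <|
    Metric.mem_cthickening_of_dist_le x _ _ _ h <| by
      rw [dist_self_add_right, norm_smul, norm_of_nonneg hr]
      exact mul_le_of_le_one_left (norm_nonneg ω) hr1
  rw [image_eq_zero_of_notMem_tsupport fun h ↦ hx (Metric.self_subset_cthickening _ h),
    image_eq_zero_of_notMem_tsupport h_near, sub_zero]

variable [NormedSpace ℝ F]

lemma tendsto_norm_sub_smul_rpow_div (hu : DifferentiableAt ℝ u x) (hp : 0 ≤ p) (ω : E) :
    Tendsto (fun r : ℝ ↦ ‖u x - u (x + r • ω)‖ ^ p / r ^ p) (𝓝[>] 0)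
      (𝓝 (‖fderiv ℝ u x ω‖ ^ p)) := by
  have h_slope : Tendsto (fun r : ℝ ↦ r⁻¹ • (u (x + r • ω) - u x)) (𝓝[>] 0)
      (𝓝 (fderiv ℝ u x ω)) :=
    (hu.hasFDerivAt.hasLineDerivAt ω).tendsto_slope_zero_right
  refine (h_slope.norm.rpow_const (.inr hp)).congr' ?_
  filter_upwards [self_mem_nhdsWithin] with r hr
  have hr : 0 < r := hr
  rw [norm_smul, norm_inv, norm_of_nonneg hr.le, norm_sub_rev, inv_mul_eq_div,
    div_rpow (norm_nonneg _) hr.le]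

variable [FiniteDimensional ℝ E] [FiniteDimensional ℝ F] [MeasurableSpace E] [BorelSpace E]
  {μ : Measure E} [μ.IsAddHaarMeasure]

lemma tendsto_translationEnergy_smul_div_rpow (hu : LipschitzWith L u)
    (hsupp : HasCompactSupport u) (hp : 0 < p) (ω : E) :
    Tendsto (fun r : ℝ ↦ translationEnergy p μ u (r • ω) / r ^ p) (𝓝[>] 0)
      (𝓝 (∫ x, ‖fderiv ℝ u x ω‖ ^ p ∂μ)) := by
  have h_compact : IsCompact (Metric.cthickening ‖ω‖ (tsupport u)) :=
    hsupp.isCompact.cthickening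
  simp only [translationEnergy, ← integral_div]
  refine tendsto_integral_filter_of_dominated_convergence
    ((Metric.cthickening ‖ω‖ (tsupport u)).indicator fun _ ↦ (L * ‖ω‖) ^ p) ?_ ?_ ?_ ?_
  · exact .of_forall fun r ↦ ((integrable_norm_sub_translate_rpow hu.continuous hsupp hp
      (r • ω)).div_const _).aestronglyMeasurable
  · filter_upwards [Ioo_mem_nhdsGT one_pos] with r hr
    refine .of_forall fun x ↦ ?_
    have hr0 : 0 < r := hr.1
    rw [norm_of_nonneg (by positivity)]
    by_cases hx : x ∈ Metric.cthickening ‖ω‖ (tsupport u)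
    · rw [indicator_of_mem hx]
      exact norm_sub_smul_rpow_div_le hu hp.le hr0 x ω
    · rw [indicator_of_notMem hx, norm_sub_smul_eq_zero hr0.le hr.2.le hx]
      simp [hp.ne']
  · exact (integrable_indicator_iff h_compact.measurableSet).2
      (integrableOn_const h_compact.measure_lt_top.ne)
  · filter_upwards [hu.ae_differentiableAt] with x hx
    exact tendsto_norm_sub_smul_rpow_div hx hp.le ω

end SmallTranslations

section DirectionalEnergy

variable {E F : Type*} [NormedAddCommGroup E] [NormedSpace ℝ E] [MeasurableSpace E]
  [NormedAddCommGroup F]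

/-- The translation energy of `u` at the displacement `ρ • ω`, integrated over the directions `ω`
against the spectral measure `ν`. Directions range over the whole space, so that a measure on the
unit sphere is represented by its image under the inclusion. -/
noncomputable def directionalEnergy (p : ℝ) (μ ν : Measure E) (u : E → F) (ρ : ℝ) : ℝ :=
  ∫ ω, translationEnergy p μ u (ρ • ω) ∂ν

variable {p : ℝ} {μ ν : Measure E} {u : E → F} {L : ℝ≥0}

lemma directionalEnergy_nonneg (p : ℝ) (μ ν : Measure E) (u : E → F) (ρ : ℝ) :
    0 ≤ directionalEnergy p μ ν u ρ :=
  integral_nonneg fun _ ↦ translationEnergy_nonneg _ _ _ _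

lemma directionalEnergy_abs [MeasurableAdd E] (p : ℝ) (μ ν : Measure E) [μ.IsAddRightInvariant]
    (u : E → F) (ρ : ℝ) : directionalEnergy p μ ν u |ρ| = directionalEnergy p μ ν u ρ := by
  rcases abs_choice ρ with h | h <;> rw [h]
  simp only [directionalEnergy, neg_smul, translationEnergy_neg]

variable [BorelSpace E] [SecondCountableTopology E]

lemma stronglyMeasurable_directionalEnergy [SFinite μ] [SFinite ν] (hu : Continuous u)
    (hp : 0 ≤ p) : StronglyMeasurable (directionalEnergy p μ ν u) :=
  StronglyMeasurable.integral_prod_right (f := fun ρ ω ↦ translationEnergy p μ u (ρ • ω))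
    ((stronglyMeasurable_translationEnergy hu hp).comp_measurable
      (g := fun z : ℝ × E ↦ z.1 • z.2) (by fun_prop))

lemma integrable_translationEnergy_smul [SFinite μ] [IsFiniteMeasureOnCompacts μ]
    [μ.IsAddRightInvariant] [IsFiniteMeasure ν] (hu : LipschitzWith L u)
    (hsupp : HasCompactSupport u) (hp : 0 < p) (ρ : ℝ) :
    Integrable (fun ω ↦ translationEnergy p μ u (ρ • ω)) ν := by
  obtain ⟨C, hC, h_le⟩ := exists_translationEnergy_le (μ := μ) hu hsupp hp
  refine .of_bound ((stronglyMeasurable_translationEnergy hu.continuous hp.le).comp_measurable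
    (by fun_prop)).aestronglyMeasurable C (.of_forall fun ω ↦ ?_)
  rw [norm_of_nonneg (translationEnergy_nonneg _ _ _ _)]
  exact (h_le _).trans (mul_le_of_le_one_right hC (min_le_left _ _))

lemma exists_directionalEnergy_le [SFinite μ] [IsFiniteMeasureOnCompacts μ]
    [μ.IsAddRightInvariant] [IsFiniteMeasure ν] (hu : LipschitzWith L u)
    (hsupp : HasCompactSupport u) (hp : 0 < p) (hν : Integrable (fun ω ↦ ‖ω‖ ^ p) ν) :
    ∃ C, ∀ r, 0 < r → ‖directionalEnergy p μ ν u r‖ ≤ C * min 1 (r ^ p) := by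
  obtain ⟨C, hC, h_le⟩ := exists_translationEnergy_le (μ := μ) hu hsupp hp
  refine ⟨C * ∫ ω, (1 + ‖ω‖ ^ p) ∂ν, fun r hr ↦ ?_⟩
  have h_min : ∀ ω : E, min 1 (‖r • ω‖ ^ p) ≤ (1 + ‖ω‖ ^ p) * min 1 (r ^ p) := fun ω ↦ by
    have hω : 0 ≤ ‖ω‖ ^ p := by positivity
    have hrp : 0 < r ^ p := by positivity
    rw [norm_smul, norm_of_nonneg hr.le, mul_rpow hr.le (norm_nonneg ω),
      mul_min_of_nonneg _ _ (by positivity)]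
    exact min_le_min (by linarith) (by nlinarith)
  rw [norm_of_nonneg (directionalEnergy_nonneg _ _ _ _ _), mul_assoc, ← integral_mul_const,
    ← integral_const_mul]
  refine integral_mono (integrable_translationEnergy_smul (μ := μ) hu hsupp hp r)
    ((((integrable_const 1).add hν).mul_const _).const_mul C) fun ω ↦ ?_
  exact (h_le _).trans (mul_le_mul_of_nonneg_left (h_min ω) hC)

lemma integrable_prod_norm_sub_smul_rpow [SFinite μ] [IsFiniteMeasureOnCompacts μ]
    [μ.IsAddRightInvariant] [IsFiniteMeasure ν] (hu : LipschitzWith L u)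
    (hsupp : HasCompactSupport u) (hp : 0 < p) (ρ : ℝ) :
    Integrable (fun z : E × E ↦ ‖u z.1 - u (z.1 + ρ • z.2)‖ ^ p) (μ.prod ν) := by
  have huc := hu.continuous
  have h_cont : Continuous fun z : E × E ↦ ‖u z.1 - u (z.1 + ρ • z.2)‖ ^ p :=
    Continuous.rpow_const (by fun_prop) fun _ ↦ .inr hp.le
  refine (integrable_prod_iff' h_cont.aestronglyMeasurable).2
    ⟨.of_forall fun ω ↦ integrable_norm_sub_translate_rpow huc hsupp hp (ρ • ω), ?_⟩
  refine (integrable_translationEnergy_smul (μ := μ) hu hsupp hp ρ).congr (.of_forall fun ω ↦ ?_)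
  exact integral_congr_ae (.of_forall fun x ↦ (norm_of_nonneg (by positivity)).symm)

lemma integral_integral_norm_sub_smul_rpow [SFinite μ] [IsFiniteMeasureOnCompacts μ]
    [μ.IsAddRightInvariant] [IsFiniteMeasure ν] (hu : LipschitzWith L u)
    (hsupp : HasCompactSupport u) (hp : 0 < p) (ρ : ℝ) :
    ∫ x, ∫ ω, ‖u x - u (x + ρ • ω)‖ ^ p ∂ν ∂μ = directionalEnergy p μ ν u ρ :=
  integral_integral_swap (integrable_prod_norm_sub_smul_rpow hu hsupp hp ρ)

lemma integral_integral_integral_norm_sub_smul_rpow_div [SFinite μ]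
    [IsFiniteMeasureOnCompacts μ] [μ.IsAddRightInvariant] [IsFiniteMeasure ν]
    (hu : LipschitzWith L u) (hsupp : HasCompactSupport u) (hp : 0 < p) {w : ℝ → ℝ}
    (hw : Measurable w) (hw0 : ∀ ρ, 0 ≤ w ρ)
    (h_int : Integrable fun ρ ↦ directionalEnergy p μ ν u ρ / w ρ) :
    ∫ x, ∫ ρ : ℝ, ∫ ω, ‖u x - u (x + ρ • ω)‖ ^ p / w ρ ∂ν ∂volume ∂μ
      = ∫ ρ : ℝ, directionalEnergy p μ ν u ρ / w ρ := by
  have huc := hu.continuous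
  have h_meas : StronglyMeasurable fun z : E × ℝ ↦ ∫ ω, ‖u z.1 - u (z.1 + z.2 • ω)‖ ^ p ∂ν := by
    have h_cont : Continuous fun z : (E × ℝ) × E ↦ ‖u z.1.1 - u (z.1.1 + z.1.2 • z.2)‖ ^ p :=
      Continuous.rpow_const (by fun_prop) fun _ ↦ .inr hp.le
    exact h_cont.stronglyMeasurable.integral_prod_right'
  have h_meas_div : AEStronglyMeasurable
      (fun z : E × ℝ ↦ (∫ ω, ‖u z.1 - u (z.1 + z.2 • ω)‖ ^ p ∂ν) / w z.2) (μ.prod volume) :=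
    (h_meas.measurable.div (by fun_prop)).aestronglyMeasurable
  have h_prod : Integrable
      (fun z : E × ℝ ↦ (∫ ω, ‖u z.1 - u (z.1 + z.2 • ω)‖ ^ p ∂ν) / w z.2) (μ.prod volume) := by
    refine (integrable_prod_iff' h_meas_div).2
      ⟨.of_forall fun ρ ↦ (integrable_prod_norm_sub_smul_rpow hu hsupp hp
        ρ).integral_prod_left.div_const (w ρ), h_int.congr (.of_forall fun ρ ↦ ?_)⟩
    have h_nonneg : ∀ x, 0 ≤ (∫ ω, ‖u x - u (x + ρ • ω)‖ ^ p ∂ν) / w ρ := fun x ↦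
      div_nonneg (integral_nonneg fun ω ↦ by positivity) (hw0 ρ)
    simp only [norm_of_nonneg (h_nonneg _), integral_div,
      integral_integral_norm_sub_smul_rpow hu hsupp hp]
  simp only [integral_div]
  rw [integral_integral_swap (f := fun x ρ ↦ (∫ ω, ‖u x - u (x + ρ • ω)‖ ^ p ∂ν) / w ρ) h_prod]
  simp only [integral_div, integral_integral_norm_sub_smul_rpow hu hsupp hp]

end DirectionalEnergy

section GradientEnergy

variable {E F : Type*} [NormedAddCommGroup E] [NormedSpace ℝ E] [FiniteDimensional ℝ E]
  [MeasurableSpace E] [BorelSpace E] [NormedAddCommGroup F] [NormedSpace ℝ F]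
  [FiniteDimensional ℝ F] {p : ℝ} {μ ν : Measure E} {u : E → F} {L : ℝ≥0}

lemma integrable_prod_norm_fderiv_rpow [IsFiniteMeasureOnCompacts μ]
    (hu : LipschitzWith L u) (hsupp : HasCompactSupport u) (hp : 0 < p)
    (hν : Integrable (fun ω ↦ ‖ω‖ ^ p) ν) :
    Integrable (fun z : E × E ↦ ‖fderiv ℝ u z.1 z.2‖ ^ p) (μ.prod ν) := by
  have h_compact : IsCompact (tsupport u) := hsupp.isCompact
  have h_const : Integrable ((tsupport u).indicator fun _ ↦ (L : ℝ) ^ p) μ :=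
    (integrable_indicator_iff h_compact.measurableSet).2
      (integrableOn_const h_compact.measure_lt_top.ne)
  have h_meas : AEStronglyMeasurable (fun z : E × E ↦ fderiv ℝ u z.1 z.2) (μ.prod ν) :=
    (ContinuousLinearMap.id ℝ (E →L[ℝ] F)).aestronglyMeasurable_comp₂
      ((measurable_fderiv ℝ u).comp measurable_fst).aestronglyMeasurable
      measurable_snd.aestronglyMeasurable
  refine (h_const.mul_prod hν).mono' (h_meas.norm.aemeasurable.pow_const p).aestronglyMeasurable
    (.of_forall fun ⟨x, ω⟩ ↦ ?_)
  rw [norm_of_nonneg (by positivity)]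
  by_cases hx : x ∈ tsupport u
  · simp only [indicator_of_mem hx, ← mul_rpow L.coe_nonneg (norm_nonneg ω)]
    exact rpow_le_rpow (norm_nonneg _)
      ((fderiv ℝ u x).le_of_opNorm_le (norm_fderiv_le_of_lipschitz ℝ hu) ω) hp.le
  · have h_zero : fderiv ℝ u x = 0 :=
      image_eq_zero_of_notMem_tsupport fun h ↦ hx (tsupport_fderiv_subset ℝ h)
    simp [indicator_of_notMem hx, h_zero, hp.ne']

variable [μ.IsAddHaarMeasure] [IsFiniteMeasure ν]

lemma tendsto_directionalEnergy_div_rpow (hu : LipschitzWith L u)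
    (hsupp : HasCompactSupport u) (hp : 0 < p) (hν : Integrable (fun ω ↦ ‖ω‖ ^ p) ν) :
    Tendsto (fun r ↦ directionalEnergy p μ ν u r / r ^ p) (𝓝[>] 0)
      (𝓝 (∫ x, ∫ ω, ‖fderiv ℝ u x ω‖ ^ p ∂ν ∂μ)) := by
  obtain ⟨C, hC, h_le⟩ := exists_translationEnergy_le (μ := μ) hu hsupp hp
  rw [integral_integral_swap (integrable_prod_norm_fderiv_rpow hu hsupp hp hν)]
  simp only [directionalEnergy, ← integral_div]
  refine tendsto_integral_filter_of_dominated_convergence (fun ω ↦ C * ‖ω‖ ^ p) ?_ ?_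
    (hν.const_mul C) (.of_forall fun ω ↦ tendsto_translationEnergy_smul_div_rpow hu hsupp hp ω)
  · exact .of_forall fun r ↦
      ((integrable_translationEnergy_smul hu hsupp hp r).div_const _).aestronglyMeasurable
  · filter_upwards [self_mem_nhdsWithin] with r hr
    refine .of_forall fun ω ↦ ?_
    have hr : 0 < r := hr
    have hrp : 0 < r ^ p := rpow_pos_of_pos hr p
    rw [norm_of_nonneg (div_nonneg (translationEnergy_nonneg _ _ _ _) hrp.le), div_le_iff₀ hrp]
    calc translationEnergy p μ u (r • ω) ≤ C * ‖r • ω‖ ^ p :=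
          (h_le _).trans (mul_le_mul_of_nonneg_left (min_le_right _ _) hC)
      _ = C * ‖ω‖ ^ p * r ^ p := by
          rw [norm_smul, norm_of_nonneg hr.le, mul_rpow hr.le (norm_nonneg ω)]
          ring

end GradientEnergy

theorem stmt15_general {E F : Type*} [NormedAddCommGroup E] [NormedSpace ℝ E]
    [FiniteDimensional ℝ E] [MeasurableSpace E] [BorelSpace E] [NormedAddCommGroup F]
    [NormedSpace ℝ F] [FiniteDimensional ℝ F] (μ ν : Measure E) [μ.IsAddHaarMeasure]
    [IsFiniteMeasure ν] {p : ℝ} (hp : 0 < p) (hν : Integrable (fun ω ↦ ‖ω‖ ^ p) ν)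
    {u : E → F} {L : ℝ≥0} (hu : LipschitzWith L u) (hsupp : HasCompactSupport u) :
    Tendsto (fun s : ℝ ↦ (1 - s) *
        ∫ x, ∫ ρ : ℝ, ∫ ω, ‖u x - u (x + ρ • ω)‖ ^ p / |ρ| ^ (1 + p * s) ∂ν ∂volume ∂μ)
      (𝓝[<] 1) (𝓝 (2 / p * ∫ x, ∫ ω, ‖fderiv ℝ u x ω‖ ^ p ∂ν ∂μ)) := by
  have h_meas : StronglyMeasurable (directionalEnergy p μ ν u) :=
    stronglyMeasurable_directionalEnergy hu.continuous hp.le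
  obtain ⟨C, hC⟩ := exists_directionalEnergy_le (μ := μ) hu hsupp hp hν
  refine (tendsto_one_sub_mul_integral_comp_abs_div_abs_rpow hp h_meas hC
    (tendsto_directionalEnergy_div_rpow hu hsupp hp hν)).congr' ?_
  filter_upwards [Ioo_mem_nhdsLT one_half_lt_one] with s hs
  have h_int := integrable_comp_abs_div_abs_rpow hp h_meas hC hs.1.le hs.2
  simp only [directionalEnergy_abs] at h_int ⊢
  rw [integral_integral_integral_norm_sub_smul_rpow_div hu hsupp hp (by fun_prop)
    (fun ρ ↦ by positivity) h_int]

theorem stmt15 (n : ℕ) (u : EuclideanSpace ℝ (Fin n) → ℝ)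
    (hu : ContDiff ℝ 1 u) (hsupp : HasCompactSupport u)
    (a : Measure (Metric.sphere (0 : EuclideanSpace ℝ (Fin n)) 1)) [IsFiniteMeasure a] :
    Filter.Tendsto (fun s : ℝ =>
        (1 - s) * ∫ x : EuclideanSpace ℝ (Fin n), ∫ ρ : ℝ,
            ∫ ω : Metric.sphere (0 : EuclideanSpace ℝ (Fin n)) 1,
              (u x - u (x + ρ • (ω : EuclideanSpace ℝ (Fin n))))^2 / |ρ| ^ (1 + 2*s) ∂a)
      (nhdsWithin 1 (Set.Iio 1))
      (nhds (∫ x : EuclideanSpace ℝ (Fin n),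
          ∫ ω : Metric.sphere (0 : EuclideanSpace ℝ (Fin n)) 1,
            (fderiv ℝ u x (ω : EuclideanSpace ℝ (Fin n)))^2 ∂a)) := by
  obtain ⟨L, hL⟩ := hu.lipschitzWith_of_hasCompactSupport hsupp one_ne_zero
  have h_incl : MeasurableEmbedding
      ((↑) : Metric.sphere (0 : EuclideanSpace ℝ (Fin n)) 1 → EuclideanSpace ℝ (Fin n)) :=
    .subtype_coe Metric.isClosed_sphere.measurableSet
  have hν : Integrable (fun ω : EuclideanSpace ℝ (Fin n) ↦ ‖ω‖ ^ (2 : ℝ)) (a.map Subtype.val) :=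
    h_incl.integrable_map_iff.2 (by simp [Function.comp_def])
  simpa [h_incl.integral_map] using stmt15_general volume (a.map Subtype.val) two_pos hν hL hsupp
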